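/- Let r ∈ (0,2). Then lim_{n→∞} (∫₀¹ |∑_{j=1}^{n} (1/√n) r_j(t)|^{r} dt)^{1/r} = √2 · (Γ((r+1)/2)/√π)^{1/r}. -/

import Mathlib

open MeasureTheory Real Filter

/-- The `j`-th Rademacher function, `r_j(t) = sgn(sin(2^j π t))`. -/
noncomputable def rademacher (j : ℕ) (t : ℝ) : ℝ :=
  Real.sign (Real.sin ((2 : ℝ) ^ j * Real.pi * t))

/-- `p₀ ∈ (1,2)` is the unique solution of `Γ((p₀+1)/2) = √π / 2`. -/
noncomputable def khintchineP0 : ℝ :=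
  sInf {p : ℝ | 1 < p ∧ p < 2 ∧ Real.Gamma ((p + 1) / 2) = Real.sqrt Real.pi / 2}

/-- The optimal constant `A_r` in the Khintchine inequality. -/
noncomputable def khintchineA (r : ℝ) : ℝ :=
  if r ≤ khintchineP0 then (2 : ℝ) ^ (1 / r - 1 / 2)
  else if r < 2 then
    (1 / Real.sqrt 2) * (Real.Gamma ((r + 1) / 2) / Real.sqrt Real.pi) ^ (-(1 / r))
  else 1

/-- The `ℓ_p` norm of a vector in `ℝⁿ` (for finite `p`). -/
noncomputable def lpNorm (p : ℝ) {n : ℕ} (x : Fin n → ℝ) : ℝ :=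
  (∑ i, |x i| ^ p) ^ (1 / p)

/-- The `ℓ_∞` norm of a vector in `ℝⁿ`. -/
noncomputable def linfNorm {n : ℕ} (x : Fin n → ℝ) : ℝ :=
  ⨆ i, |x i|

open scoped Topology

lemma abs_rademacher_le_one (j : ℕ) (t : ℝ) : |rademacher j t| ≤ 1 := by
  unfold rademacher
  rcases Real.sign_apply_eq (Real.sin ((2 : ℝ) ^ j * Real.pi * t)) with h | h | h <;> simp [h]

lemma measurable_sign_real : Measurable Real.sign := by
  unfold Real.sign
  exact Measurable.ite measurableSet_Iio measurable_const
    (Measurable.ite measurableSet_Ioi measurable_const measurable_const)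

lemma measurable_rademacher (j : ℕ) : Measurable (rademacher j) :=
  measurable_sign_real.comp (by fun_prop)

lemma rademacher_succ (j : ℕ) (t : ℝ) : rademacher (j + 1) t = rademacher j (2 * t) := by
  unfold rademacher
  ring_nf

lemma rademacher_one_periodic : Function.Periodic (rademacher 1) 1 := by
  intro t
  unfold rademacher
  rw [show (2 : ℝ) ^ 1 * Real.pi * (t + 1) = 2 ^ 1 * Real.pi * t + 2 * Real.pi by ring,
    Real.sin_add_two_pi]

lemma rademacher_periodic (j : ℕ) : Function.Periodic (rademacher (j + 1)) 1 := by
  induction j with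
  | zero => exact rademacher_one_periodic
  | succ j ih =>
    intro t
    rw [rademacher_succ (j + 1), rademacher_succ (j + 1), show 2 * (t + 1) = 2 * t + 1 + 1 by ring,
      ih, ih]

lemma rademacher_one_of_mem_left {t : ℝ} (ht : t ∈ Set.Ioo (0 : ℝ) (1 / 2)) :
    rademacher 1 t = 1 := by
  unfold rademacher
  apply Real.sign_of_pos
  apply Real.sin_pos_of_pos_of_lt_pi
  · have := ht.1; positivity
  · nlinarith [ht.2, Real.pi_pos]

lemma rademacher_one_of_mem_right {t : ℝ} (ht : t ∈ Set.Ioo (1 / 2 : ℝ) 1) :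
    rademacher 1 t = -1 := by
  unfold rademacher
  apply Real.sign_of_neg
  rw [← Real.sin_sub_two_pi]
  apply Real.sin_neg_of_neg_of_neg_pi_lt
  · nlinarith [ht.2, Real.pi_pos]
  · nlinarith [ht.1, Real.pi_pos]

/-- The partial sums `r_1 + ⋯ + r_n` of the Rademacher functions. -/
noncomputable def rademacherSum (n : ℕ) (t : ℝ) : ℝ :=
  ∑ j ∈ Finset.range n, rademacher (j + 1) t

lemma rademacherSum_succ (n : ℕ) (t : ℝ) :
    rademacherSum (n + 1) t = rademacher 1 t + rademacherSum n (2 * t) := by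
  simp only [rademacherSum, Finset.sum_range_succ', rademacher_succ (_ + 1)]
  rw [add_comm]

lemma abs_rademacherSum_le (n : ℕ) (t : ℝ) : |rademacherSum n t| ≤ n := by
  refine (Finset.abs_sum_le_sum_abs _ _).trans ?_
  refine (Finset.sum_le_sum fun j _ => abs_rademacher_le_one (j + 1) t).trans ?_
  simp

lemma measurable_rademacherSum (n : ℕ) : Measurable (rademacherSum n) :=
  Finset.measurable_fun_sum _ fun j _ => measurable_rademacher (j + 1)

lemma rademacherSum_periodic (n : ℕ) : Function.Periodic (rademacherSum n) 1 := fun t =>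
  Finset.sum_congr rfl fun j _ => rademacher_periodic j t

lemma intervalIntegrable_comp_of_bounded {E : Type*} [NormedAddCommGroup E] {H : ℝ → E}
    (hH : Continuous H) {g : ℝ → ℝ} (hg : Measurable g) {C : ℝ} (hC : ∀ t, |g t| ≤ C) (a b : ℝ) :
    IntervalIntegrable (fun t => H (g t)) volume a b := by
  obtain ⟨B, hB⟩ := (isCompact_Icc (a := -C) (b := C)).exists_bound_of_continuousOn hH.continuousOn
  refine (intervalIntegrable_const (c := B)).mono_fun
    (hH.comp_aestronglyMeasurable hg.aestronglyMeasurable) (ae_of_all _ fun t => ?_)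
  exact (hB _ (abs_le.mp (hC t))).trans (le_abs_self B)

lemma integral_comp_rademacherSum_succ {E : Type*} [NormedAddCommGroup E] [NormedSpace ℝ E]
    {H : ℝ → E} (hH : Continuous H) (n : ℕ) :
    ∫ t in (0 : ℝ)..1, H (rademacherSum (n + 1) t) =
      (2⁻¹ : ℝ) • (∫ t in (0 : ℝ)..1, H (1 + rademacherSum n t)) +
        (2⁻¹ : ℝ) • ∫ t in (0 : ℝ)..1, H (-1 + rademacherSum n t) := by
  have hint := intervalIntegrable_comp_of_bounded hH (measurable_rademacherSum (n + 1))
    (abs_rademacherSum_le (n + 1))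
  have hper : Function.Periodic (fun t => H (-1 + rademacherSum n t)) 1 := fun t => by
    simp only [rademacherSum_periodic n t]
  rw [← intervalIntegral.integral_add_adjacent_intervals (hint 0 (1 / 2)) (hint (1 / 2) 1)]
  congr 1
  · rw [intervalIntegral.integral_congr_Ioo_of_le (by norm_num)
      (g := fun t => H (1 + rademacherSum n (2 * t)))]
    · rw [intervalIntegral.integral_comp_mul_left (fun t => H (1 + rademacherSum n t)) two_ne_zero]
      norm_num
    · intro t ht
      simp only [rademacherSum_succ, rademacher_one_of_mem_left ht]
  · rw [intervalIntegral.integral_congr_Ioo_of_le (by norm_num)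
      (g := fun t => H (-1 + rademacherSum n (2 * t)))]
    · rw [intervalIntegral.integral_comp_mul_left (fun t => H (-1 + rademacherSum n t)) two_ne_zero]
      have := hper.intervalIntegral_add_eq 1 0
      norm_num at this ⊢
      rw [this]
    · intro t ht
      simp only [rademacherSum_succ, rademacher_one_of_mem_right ht]

lemma integral_rademacherSum_sq (n : ℕ) :
    ∫ t in (0 : ℝ)..1, rademacherSum n t ^ 2 = n := by
  induction n with
  | zero => simp [rademacherSum]
  | succ n ih =>
    have h1 := intervalIntegrable_comp_of_bounded (H := fun x => (1 + x) ^ 2) (by fun_prop)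
      (measurable_rademacherSum n) (abs_rademacherSum_le n) 0 1
    have h2 := intervalIntegrable_comp_of_bounded (H := fun x => (-1 + x) ^ 2) (by fun_prop)
      (measurable_rademacherSum n) (abs_rademacherSum_le n) 0 1
    have h3 := intervalIntegrable_comp_of_bounded (H := fun x => x ^ 2) (by fun_prop)
      (measurable_rademacherSum n) (abs_rademacherSum_le n) 0 1
    rw [integral_comp_rademacherSum_succ (H := fun x => x ^ 2) (by fun_prop) n, ← smul_add,
      ← intervalIntegral.integral_add h1 h2]
    have : ∀ x : ℝ, (1 + x) ^ 2 + (-1 + x) ^ 2 = 2 * (1 + x ^ 2) := fun x => by ring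
    simp only [this]
    rw [intervalIntegral.integral_const_mul,
      intervalIntegral.integral_add intervalIntegrable_const h3, ih]
    simp
    ring

lemma integral_cexp_rademacherSum (n : ℕ) (s : ℝ) :
    ∫ t in (0 : ℝ)..1, Complex.exp (s * rademacherSum n t * Complex.I) =
      Complex.cos s ^ n := by
  induction n with
  | zero => simp [rademacherSum]
  | succ n ih =>
    rw [integral_comp_rademacherSum_succ (H := fun x => Complex.exp (s * x * Complex.I))
      (by fun_prop) n]
    have (a : ℝ) : ∀ x : ℝ, Complex.exp (s * (a + x : ℝ) * Complex.I) =
        Complex.exp (s * a * Complex.I) * Complex.exp (s * x * Complex.I) := fun x => by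
      rw [← Complex.exp_add]
      push_cast
      ring_nf
    simp only [this, intervalIntegral.integral_const_mul, ih, Complex.real_smul, pow_succ,
      Complex.cos]
    push_cast
    ring_nf

open ProbabilityTheory

lemma integral_abs_rpow_gaussianReal {r : ℝ} (hr : 0 < r) :
    ∫ x, |x| ^ r ∂(gaussianReal 0 1) =
      Real.sqrt 2 ^ r * (Real.Gamma ((r + 1) / 2) / Real.sqrt Real.pi) := by
  rw [integral_gaussianReal_eq_integral_smul one_ne_zero]
  have h : ∀ x : ℝ, gaussianPDFReal 0 1 x • |x| ^ r =
      (Real.sqrt (2 * Real.pi))⁻¹ * (fun y => y ^ r * Real.exp (-(1 / 2) * y ^ (2 : ℝ))) |x| := by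
    intro x
    simp [gaussianPDFReal]
    ring_nf
  simp only [h]
  rw [integral_const_mul,
    integral_comp_abs (f := fun y => y ^ r * Real.exp (-(1 / 2) * y ^ (2 : ℝ))),
    integral_rpow_mul_exp_neg_mul_rpow two_pos (by linarith) (by norm_num)]
  have h2 : (1 / 2 : ℝ) ^ (-(r + 1) / 2) = Real.sqrt 2 ^ r * Real.sqrt 2 := by
    rw [Real.sqrt_eq_rpow, one_div, Real.inv_rpow two_pos.le, ← Real.rpow_neg two_pos.le,
      ← Real.rpow_mul two_pos.le, ← Real.rpow_add two_pos]
    congr 1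
    ring
  rw [h2, Real.sqrt_mul two_pos.le]
  have := Real.sqrt_pos.mpr Real.pi_pos
  field_simp

lemma abs_rpow_le_sq_mul {r K : ℝ} (hr0 : 0 < r) (hr2 : r < 2) (hK : 0 < K) (x : ℝ) :
    |x| ^ r - min (|x| ^ r) (K ^ r) ≤ K ^ (r - 2) * x ^ 2 := by
  rcases le_total |x| K with h | h
  · rw [min_eq_left (Real.rpow_le_rpow (abs_nonneg x) h hr0.le), sub_self]
    positivity
  · have hx : 0 < |x| := hK.trans_le h
    have h1 : |x| ^ r = |x| ^ (r - 2) * x ^ 2 := by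
      rw [← sq_abs, ← Real.rpow_natCast, ← Real.rpow_add hx]
      norm_num
    have h2 : |x| ^ (r - 2) ≤ K ^ (r - 2) :=
      Real.rpow_le_rpow_of_nonpos hK h (by linarith)
    have h3 : 0 ≤ min (|x| ^ r) (K ^ r) := by positivity
    have := mul_le_mul_of_nonneg_right h2 (sq_nonneg x)
    linarith

lemma abs_rpow_le_one_add_sq {r : ℝ} (hr0 : 0 < r) (hr2 : r < 2) (x : ℝ) :
    |x| ^ r ≤ 1 + x ^ 2 := by
  have := abs_rpow_le_sq_mul hr0 hr2 one_pos x
  have h := min_le_right (|x| ^ r) ((1 : ℝ) ^ r)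
  simp only [Real.one_rpow] at *
  linarith

lemma integrable_abs_rpow {r : ℝ} (hr0 : 0 < r) (hr2 : r < 2) {μ : Measure ℝ} [IsFiniteMeasure μ]
    (h : Integrable (fun x => x ^ 2) μ) : Integrable (fun x => |x| ^ r) μ := by
  refine ((integrable_const (1 : ℝ)).add h).mono' ?_ (ae_of_all _ fun x => ?_)
  · exact (continuous_abs.rpow_const fun _ => Or.inr hr0.le).aestronglyMeasurable
  · rw [Real.norm_of_nonneg (by positivity)]
    exact abs_rpow_le_one_add_sq hr0 hr2 x

lemma abs_integral_abs_rpow_sub_le {r K C : ℝ} (hr0 : 0 < r) (hr2 : r < 2) (hK : 0 < K)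
    {μ : Measure ℝ} [IsFiniteMeasure μ] (h : Integrable (fun x => x ^ 2) μ)
    (hC : ∫ x, x ^ 2 ∂μ ≤ C) :
    |∫ x, |x| ^ r ∂μ - ∫ x, min (|x| ^ r) (K ^ r) ∂μ| ≤ K ^ (r - 2) * C := by
  have h1 := integrable_abs_rpow hr0 hr2 h
  have h2 : Integrable (fun x => min (|x| ^ r) (K ^ r)) μ := h1.inf (integrable_const _)
  rw [← integral_sub h1 h2, abs_of_nonneg
    (integral_nonneg fun x => sub_nonneg.mpr (min_le_left _ _))]
  calc _ ≤ ∫ x, K ^ (r - 2) * x ^ 2 ∂μ :=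
        integral_mono (h1.sub h2) (h.const_mul _) (abs_rpow_le_sq_mul hr0 hr2 hK)
    _ ≤ _ := by
        rw [integral_const_mul]
        gcongr

/-- Weak convergence with uniformly bounded second moments implies convergence of the absolute
moments of order `r < 2`. -/
lemma tendsto_integral_abs_rpow_of_tendsto {r C : ℝ} (hr0 : 0 < r) (hr2 : r < 2)
    {μ : ℕ → ProbabilityMeasure ℝ} {ν : ProbabilityMeasure ℝ} (hμ : Tendsto μ atTop (𝓝 ν))
    (hi : ∀ n, Integrable (fun x => x ^ 2) (μ n : Measure ℝ))
    (hC : ∀ n, ∫ x, x ^ 2 ∂(μ n : Measure ℝ) ≤ C)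
    (hi' : Integrable (fun x => x ^ 2) (ν : Measure ℝ))
    (hC' : ∫ x, x ^ 2 ∂(ν : Measure ℝ) ≤ C) :
    Tendsto (fun n => ∫ x, |x| ^ r ∂(μ n : Measure ℝ)) atTop
      (𝓝 (∫ x, |x| ^ r ∂(ν : Measure ℝ))) := by
  have hlim : Tendsto (fun K : ℝ => K ^ (r - 2) * C) atTop (𝓝 0) := by
    have := (tendsto_rpow_neg_atTop (sub_pos.mpr hr2)).mul_const C
    simpa using this
  rw [Metric.tendsto_atTop']
  intro ε hε
  obtain ⟨K, hKε, hK⟩ :=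
    ((hlim.eventually_lt_const (show (0 : ℝ) < ε / 3 by positivity)).and
      (eventually_gt_atTop 0)).exists
  let f : BoundedContinuousFunction ℝ ℝ := BoundedContinuousFunction.ofNormedAddCommGroup
    (fun x => min (|x| ^ r) (K ^ r))
    ((continuous_abs.rpow_const fun _ => Or.inr hr0.le).min continuous_const) (K ^ r) fun x => by
      rw [Real.norm_of_nonneg (by positivity)]
      exact min_le_right _ _
  have hf := (ProbabilityMeasure.tendsto_iff_forall_integral_tendsto.mp hμ) f
  obtain ⟨N, hN⟩ := Metric.tendsto_atTop'.mp hf (ε / 3) (by positivity)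
  refine ⟨N, fun n hn => ?_⟩
  have h1 := hN n hn
  have h2 := abs_integral_abs_rpow_sub_le hr0 hr2 hK (hi n) (hC n)
  have h3 := abs_integral_abs_rpow_sub_le hr0 hr2 hK hi' hC'
  simp only [f, BoundedContinuousFunction.coe_ofNormedAddCommGroup] at h1
  rw [Real.dist_eq, abs_lt] at *
  rw [abs_le] at h2 h3
  constructor <;> linarith

lemma tendsto_cos_inv_sqrt_mul_pow (s : ℝ) :
    Tendsto (fun n : ℕ => Complex.cos (((Real.sqrt n)⁻¹ * s : ℝ)) ^ n) atTop
      (𝓝 (Complex.exp (-s ^ 2 / 2))) := by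
  have hP : IsProbabilityMeasure (volume.restrict (Set.Ioc (0 : ℝ) 1)) := ⟨by simp⟩
  have h0 : ∫ t in Set.Ioc (0 : ℝ) 1, rademacherSum 1 t = 0 := by
    rw [← intervalIntegral.integral_of_le zero_le_one,
      integral_comp_rademacherSum_succ (H := fun x => x) continuous_id 0]
    simp [rademacherSum]
  have h1 : ∫ t in Set.Ioc (0 : ℝ) 1, (rademacherSum 1 ^ 2) t = 1 := by
    rw [← intervalIntegral.integral_of_le zero_le_one]
    simpa using integral_rademacherSum_sq 1
  convert tendsto_charFun_inv_sqrt_mul_pow (measurable_rademacherSum 1).aemeasurable h0 h1 s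
    using 3 with n
  rw [charFun_apply_real, integral_map (measurable_rademacherSum 1).aemeasurable
    (by fun_prop), ← intervalIntegral.integral_of_le zero_le_one, integral_cexp_rademacherSum,
    pow_one]

/-- The law of `(r_1 + ⋯ + r_n) / √n` under the uniform measure on the unit interval. -/
noncomputable def rademacherLaw (n : ℕ) : ProbabilityMeasure ℝ :=
  ⟨(volume.restrict (Set.Ioc (0 : ℝ) 1)).map fun t => (Real.sqrt n)⁻¹ * rademacherSum n t,
    have : IsProbabilityMeasure (volume.restrict (Set.Ioc (0 : ℝ) 1)) := ⟨by simp⟩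
    Measure.isProbabilityMeasure_map ((measurable_rademacherSum n).const_mul _).aemeasurable⟩

lemma integral_rademacherLaw {E : Type*} [NormedAddCommGroup E] [NormedSpace ℝ E]
    {H : ℝ → E} (hH : Continuous H) (n : ℕ) :
    ∫ x, H x ∂(rademacherLaw n : Measure ℝ) =
      ∫ t in (0 : ℝ)..1, H ((Real.sqrt n)⁻¹ * rademacherSum n t) := by
  rw [intervalIntegral.integral_of_le zero_le_one]
  exact integral_map_of_stronglyMeasurable ((measurable_rademacherSum n).const_mul _)
    hH.stronglyMeasurable

lemma integrable_rademacherLaw {E : Type*} [NormedAddCommGroup E]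
    {H : ℝ → E} (hH : Continuous H) (n : ℕ) :
    Integrable H (rademacherLaw n : Measure ℝ) := by
  refine (integrable_map_measure hH.aestronglyMeasurable
    ((measurable_rademacherSum n).const_mul _).aemeasurable).mpr ?_
  exact (intervalIntegrable_iff_integrableOn_Ioc_of_le zero_le_one).mp
    (intervalIntegrable_comp_of_bounded (H := fun x => H ((Real.sqrt n)⁻¹ * x)) (by fun_prop)
      (measurable_rademacherSum n) (abs_rademacherSum_le n) 0 1)

lemma tendsto_rademacherLaw :
    Tendsto rademacherLaw atTop (𝓝 ⟨gaussianReal 0 1, inferInstance⟩) := by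
  refine ProbabilityMeasure.tendsto_iff_tendsto_charFun.mpr fun s => ?_
  convert tendsto_cos_inv_sqrt_mul_pow s using 2 with n
  · rw [charFun_apply_real, integral_rademacherLaw (by fun_prop), ← integral_cexp_rademacherSum]
    congr! 3 with t
    push_cast
    ring
  · simp [charFun_gaussianReal, neg_div]

lemma integral_sq_rademacherLaw_le (n : ℕ) :
    ∫ x, x ^ 2 ∂(rademacherLaw n : Measure ℝ) ≤ 1 := by
  rw [integral_rademacherLaw (by fun_prop)]
  simp only [mul_pow, inv_pow, Real.sq_sqrt (Nat.cast_nonneg n)]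
  rw [intervalIntegral.integral_const_mul, integral_rademacherSum_sq]
  exact inv_mul_le_one

lemma integral_sq_gaussianReal : ∫ x, x ^ 2 ∂(gaussianReal 0 1) = 1 := by
  have := variance_id_gaussianReal (μ := 0) (v := 1)
  rw [variance_eq_integral aemeasurable_id] at this
  simpa using this

/-- Haagerup's central limit computation: the `L_r` norm of the normalized Rademacher sums
converges to `√2 (Γ((r+1)/2)/√π)^{1/r}`. -/
theorem rademacher_clt_limit (r : ℝ) (hr0 : 0 < r) (hr2 : r < 2) :
    Tendsto (fun n : ℕ =>
        (∫ t in Set.Icc (0 : ℝ) 1,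
          |∑ j : Fin n, (1 / Real.sqrt n) * rademacher (j.1 + 1) t| ^ r) ^ (1 / r))
      atTop
      (nhds (Real.sqrt 2 * (Real.Gamma ((r + 1) / 2) / Real.sqrt Real.pi) ^ (1 / r))) := by
  have hsq : Integrable (fun x : ℝ => x ^ 2) (gaussianReal 0 1) :=
    (memLp_id_gaussianReal 2).integrable_sq
  have h := tendsto_integral_abs_rpow_of_tendsto hr0 hr2 tendsto_rademacherLaw
    (integrable_rademacherLaw (by fun_prop)) integral_sq_rademacherLaw_le hsq
    integral_sq_gaussianReal.le
  have hΓ : 0 < Real.Gamma ((r + 1) / 2) := Real.Gamma_pos_of_pos (by linarith)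
  convert h.rpow_const (p := 1 / r) (Or.inr (by positivity)) using 2 with n
  · rw [integral_rademacherLaw (continuous_abs.rpow_const fun _ => Or.inr hr0.le),
      intervalIntegral.integral_of_le zero_le_one, integral_Icc_eq_integral_Ioc]
    simp only [rademacherSum, Finset.mul_sum, one_div, Finset.sum_range]
  · rw [ProbabilityMeasure.coe_mk, integral_abs_rpow_gaussianReal hr0,
      Real.mul_rpow (by positivity) (by positivity), ← Real.rpow_mul (by positivity),
      mul_one_div_cancel hr0.ne', Real.rpow_one]
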